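/- Suppose all blocks have the same dimension, k_1 = k_2 = … = k_s = t, and let 𝒞 ⊆ ℤ_m^n be an (n, K, d) (𝕡,π)-code with t dividing n − ⌈log_m K⌉. If 𝒞 is I-perfect for every ideal I of 𝕡 with |I| = ((n − ⌈log_m K⌉)/t)·l, then 𝒞 is an MDS (𝕡,π)-code. -/

import Mathlib

open scoped Classical

noncomputable section

/-- Lee weight of an element of `ZMod m`. -/
def leeWt (m : ℕ) (a : ZMod m) : ℕ := min a.val (m - a.val)

/-- Block Lee weight of the `i`-th block of `u`. -/
def blockWt (m s : ℕ) (π : Fin s → ℕ) (u : ∀ i : Fin s, Fin (π i) → ZMod m)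
    (i : Fin s) : ℕ :=
  Finset.univ.sup fun t => leeWt m (u i t)

/-- The `(𝕡,π)`-weight of `u`. -/
def pomsetWt (m s : ℕ) (P : PartialOrder (Fin s)) (π : Fin s → ℕ)
    (u : ∀ i : Fin s, Fin (π i) → ZMod m) : ℕ :=
  ∑ i : Fin s,
    if ∃ j, j ≠ i ∧ P.le i j ∧ 0 < blockWt m s π u j then m / 2
    else blockWt m s π u i

/-- The pomset block distance. -/
def pomsetDist (m s : ℕ) (P : PartialOrder (Fin s)) (π : Fin s → ℕ)
    (u v : ∀ i : Fin s, Fin (π i) → ZMod m) : ℕ :=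
  pomsetWt m s P π (u - v)

/-- An ideal of the pomset `𝕡`, given by its count function `I : [s] → {0,…,⌊m/2⌋}`. -/
def IsIdeal (m s : ℕ) (P : PartialOrder (Fin s)) (I : Fin s → ℕ) : Prop :=
  (∀ a, I a ≤ m / 2) ∧ ∀ a b, 0 < I a → P.le b a → b ≠ a → I b = m / 2

/-- An ideal has full count if every element of its root set has count `⌊m/2⌋`. -/
def FullCount (m : ℕ) {s : ℕ} (I : Fin s → ℕ) : Prop :=
  ∀ a, 0 < I a → I a = m / 2

/-- The cardinality `|I|` of an ideal. -/
def idealCard {s : ℕ} (I : Fin s → ℕ) : ℕ := ∑ a, I a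

/-- The cardinality `|I*|` of the root set of an ideal. -/
def rootCard {s : ℕ} (I : Fin s → ℕ) : ℕ :=
  (Finset.univ.filter fun a => 0 < I a).card

/-- `Σ_{i ∈ I*} k_i`. -/
def rootSum {s : ℕ} (π I : Fin s → ℕ) : ℕ :=
  ∑ a ∈ Finset.univ.filter (fun a => 0 < I a), π a

/-- The `I`-ball centered at `u`. -/
def ballI (m s : ℕ) (π : Fin s → ℕ) (I : Fin s → ℕ)
    (u : ∀ i : Fin s, Fin (π i) → ZMod m) :
    Set (∀ i : Fin s, Fin (π i) → ZMod m) :=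
  {v | ∀ i, blockWt m s π (u - v) i ≤ I i}

/-- `𝒞` is `I`-perfect: the `I`-balls centered at codewords are pairwise
disjoint and cover the whole space. -/
def IPerfect (m s : ℕ) (π : Fin s → ℕ) (I : Fin s → ℕ)
    (C : Set (∀ i : Fin s, Fin (π i) → ZMod m)) : Prop :=
  (C.Pairwise fun c c' => Disjoint (ballI m s π I c) (ballI m s π I c')) ∧
  (⋃ c ∈ C, ballI m s π I c) = Set.univ

/-- The `r`-ball centered at `u`. -/
def ballR (m s : ℕ) (P : PartialOrder (Fin s)) (π : Fin s → ℕ) (r : ℕ)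
    (u : ∀ i : Fin s, Fin (π i) → ZMod m) :
    Set (∀ i : Fin s, Fin (π i) → ZMod m) :=
  {v | pomsetDist m s P π u v ≤ r}

/-- The standard dot product on `ℤ_m^n`. -/
def dotProd (m s : ℕ) (π : Fin s → ℕ)
    (c v : ∀ i : Fin s, Fin (π i) → ZMod m) : ZMod m :=
  ∑ i, ∑ t, c i t * v i t

/-- The dual code `𝒞^⊥`. -/
def dualCode (m s : ℕ) (π : Fin s → ℕ)
    (C : Set (∀ i : Fin s, Fin (π i) → ZMod m)) :
    Set (∀ i : Fin s, Fin (π i) → ZMod m) :=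
  {v | ∀ c ∈ C, dotProd m s π c v = 0}

/-- The dual pomset, encoded by the opposite partial order. -/
def dualOrder (s : ℕ) (P : PartialOrder (Fin s)) : PartialOrder (Fin s) where
  le a b := P.le b a
  lt a b := P.lt b a
  le_refl a := P.le_refl a
  le_trans a b c h1 h2 := P.le_trans _ _ _ h2 h1
  lt_iff_le_not_ge a b := P.lt_iff_le_not_ge b a
  le_antisymm a b h1 h2 := (P.le_antisymm _ _ h1 h2).symm

/-- The minimum `(𝕡,π)`-distance of a code. -/
def minDist (m s : ℕ) (P : PartialOrder (Fin s)) (π : Fin s → ℕ)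
    (C : Set (∀ i : Fin s, Fin (π i) → ZMod m)) : ℕ :=
  sInf {r | ∃ c ∈ C, ∃ c' ∈ C, c ≠ c' ∧ r = pomsetWt m s P π (c - c')}

/-- `𝒞` is an MDS `(𝕡,π)`-code: it attains the Singleton bound
`n − ⌈log_m K⌉ ≥ max { Σ_{i∈I*} k_i : I ideal, |I*| = ⌊(d−1)/⌊m/2⌋⌋ }`. -/
def IsMDS (m s : ℕ) (P : PartialOrder (Fin s)) (π : Fin s → ℕ)
    (C : Set (∀ i : Fin s, Fin (π i) → ZMod m)) : Prop :=
  (∀ I, IsIdeal m s P I →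
      rootCard I = (minDist m s P π C - 1) / (m / 2) →
      rootSum π I ≤ (∑ i, π i) - Nat.clog m (Nat.card ↥C)) ∧
  (∃ I, IsIdeal m s P I ∧
      rootCard I = (minDist m s P π C - 1) / (m / 2) ∧
      rootSum π I = (∑ i, π i) - Nat.clog m (Nat.card ↥C))

/-- The chain pomset on `[s]`: the usual total order on `Fin s`. -/
def chainOrder (s : ℕ) : PartialOrder (Fin s) := inferInstance

theorem aux_lee_le (m : ℕ) (a : ZMod m) : leeWt m a ≤ m / 2 := by
  unfold leeWt; omega

theorem aux_lee_zero (m : ℕ) (hm : 4 ≤ m) (a : ZMod m) : leeWt m a = 0 ↔ a = 0 := by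
  haveI : NeZero m := ⟨by omega⟩
  have h := ZMod.val_lt a
  rw [← ZMod.val_eq_zero]
  unfold leeWt; omega

theorem aux_block_le (m s : ℕ) (π : Fin s → ℕ) (u : ∀ i : Fin s, Fin (π i) → ZMod m)
    (i : Fin s) : blockWt m s π u i ≤ m / 2 := by
  unfold blockWt
  exact Finset.sup_le fun t _ => aux_lee_le m _

theorem aux_block_zero (m s : ℕ) (hm : 4 ≤ m) (π : Fin s → ℕ)
    (u : ∀ i : Fin s, Fin (π i) → ZMod m)
    (i : Fin s) : blockWt m s π u i = 0 ↔ u i = 0 := by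
  unfold blockWt
  constructor
  · intro h
    funext t
    have h2 : leeWt m (u i t) ≤ Finset.univ.sup fun t => leeWt m (u i t) :=
      Finset.le_sup (f := fun t => leeWt m (u i t)) (Finset.mem_univ t)
    rw [h] at h2
    exact (aux_lee_zero m hm _).1 (by omega)
  · intro h
    apply Nat.le_zero.1
    apply Finset.sup_le
    intro t _
    rw [h]
    exact ((aux_lee_zero m hm _).2 rfl).le

/-- The ideal generated by a vector. -/
theorem aux_wt_ideal (m s : ℕ) (P : PartialOrder (Fin s)) (π : Fin s → ℕ)
    (u : ∀ i : Fin s, Fin (π i) → ZMod m) :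
    ∃ I, IsIdeal m s P I ∧ idealCard I = pomsetWt m s P π u ∧
      ∀ i, blockWt m s π u i ≤ I i := by
  refine ⟨fun i => if ∃ j, j ≠ i ∧ P.le i j ∧ 0 < blockWt m s π u j then m / 2
    else blockWt m s π u i, ⟨?_, ?_⟩, rfl, ?_⟩
  · intro a
    dsimp only
    split_ifs
    · exact le_rfl
    · exact aux_block_le m s π u a
  · intro a b ha hba hne
    dsimp only at ha ⊢
    rw [if_pos]
    split_ifs at ha with h
    · obtain ⟨j, hj, haj, hp⟩ := h
      refine ⟨j, ?_, P.le_trans _ _ _ hba haj, hp⟩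
      rintro rfl
      exact hne (P.le_antisymm _ _ hba haj)
    · exact ⟨a, hne.symm, hba, ha⟩
  · intro i
    dsimp only
    split_ifs
    · exact aux_block_le m s π u i
    · exact le_rfl

theorem aux_minimal_gen {α : Type*} [Finite α] [PartialOrder α] (p : α → Prop)
    (h : ∃ a, p a) : ∃ a, p a ∧ ∀ b, b ≤ a → b ≠ a → ¬ p b := by
  obtain ⟨a, ha⟩ := (Set.toFinite {a | p a}).exists_minimal h
  exact ⟨a, ha.1, fun b hb hne hpb => hne (le_antisymm hb (ha.2 hpb hb))⟩

theorem aux_minimal (s : ℕ) (P : PartialOrder (Fin s)) (p : Fin s → Prop) (h : ∃ a, p a) :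
    ∃ a, p a ∧ ∀ b, P.le b a → b ≠ a → ¬ p b :=
  @aux_minimal_gen (Fin s) _ P p h

theorem aux_extend (m s : ℕ) (P : PartialOrder (Fin s)) (k : ℕ) :
    ∀ I, IsIdeal m s P I → idealCard I + k ≤ s * (m / 2) →
      ∃ J, IsIdeal m s P J ∧ idealCard J = idealCard I + k ∧ ∀ i, I i ≤ J i := by
  induction k with
  | zero => exact fun I hI _ => ⟨I, hI, rfl, fun _ => le_rfl⟩
  | succ k ih =>
    intro I hI hle
    have hex : ∃ a, I a < m / 2 := by
      by_contra! hcon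
      have : s * (m / 2) ≤ idealCard I := by
        unfold idealCard
        calc s * (m / 2) = ∑ _a : Fin s, m / 2 := by simp
          _ ≤ _ := Finset.sum_le_sum fun a _ => hcon a
      omega
    obtain ⟨a, ha, hmin⟩ := aux_minimal s P (fun a => I a < m / 2) hex
    have hid : IsIdeal m s P (fun i => I i + if i = a then 1 else 0) := by
      constructor
      · intro b
        have := hI.1 b
        dsimp only
        split_ifs with h
        · subst h; omega
        · omega
      · intro c b hc hbc hne
        dsimp only at hc ⊢
        by_cases hca : c = a
        · subst hca
          have h1 := hmin b hbc hne
          have h2 := hI.1 b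
          rw [if_neg hne]; omega
        · rw [if_neg hca] at hc
          have h1 := hI.2 c b hc hbc hne
          have hb : b ≠ a := by rintro rfl; omega
          rw [if_neg hb]; omega
    have hcard : idealCard (fun i => I i + if i = a then 1 else 0) = idealCard I + 1 := by
      simp [idealCard, Finset.sum_add_distrib]
    obtain ⟨J, hJ, hJc, hJle⟩ := ih _ hid (by omega)
    refine ⟨J, hJ, by omega, fun i => le_trans ?_ (hJle i)⟩
    exact Nat.le_add_right _ _

/-- Down-closed finite sets. -/
def AuxLower (s : ℕ) (P : PartialOrder (Fin s)) (S : Finset (Fin s)) : Prop :=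
  ∀ a b, a ∈ S → P.le b a → b ∈ S

theorem aux_lower_insert (s : ℕ) (P : PartialOrder (Fin s)) (S : Finset (Fin s))
    (hS : AuxLower s P S) (hc : S.card < s) :
    ∃ a, a ∉ S ∧ AuxLower s P (insert a S) := by
  have hex : ∃ a, a ∉ S := by
    by_contra! hcon
    have : S = Finset.univ := Finset.eq_univ_iff_forall.2 hcon
    rw [this] at hc
    simp at hc
  obtain ⟨a, ha, hmin⟩ := aux_minimal s P (fun a => a ∉ S) hex
  refine ⟨a, ha, ?_⟩
  intro c b hcm hbc
  rcases Finset.mem_insert.1 hcm with rfl | hcm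
  · by_cases hb : b = c
    · subst hb; exact Finset.mem_insert_self _ _
    · exact Finset.mem_insert_of_mem (not_not.1 (hmin b hbc hb))
  · exact Finset.mem_insert_of_mem (hS c b hcm hbc)

theorem aux_lower_exists (s : ℕ) (P : PartialOrder (Fin s)) (r : ℕ) (hr : r ≤ s) :
    ∃ S, AuxLower s P S ∧ S.card = r := by
  induction r with
  | zero => exact ⟨∅, fun a b h => by simp at h, rfl⟩
  | succ r ih =>
    obtain ⟨S, hS, hc⟩ := ih (by omega)
    obtain ⟨a, ha, hSa⟩ := aux_lower_insert s P S hS (by omega)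
    exact ⟨_, hSa, by rw [Finset.card_insert_of_notMem ha, hc]⟩

theorem aux_lower_ideal (m s : ℕ) (P : PartialOrder (Fin s)) (S : Finset (Fin s))
    (hS : AuxLower s P S) : IsIdeal m s P (fun i => if i ∈ S then m / 2 else 0) := by
  constructor
  · intro a
    dsimp only
    split_ifs <;> omega
  · intro a b ha hba _
    dsimp only at ha ⊢
    split_ifs at ha with h
    · rw [if_pos (hS a b h hba)]
    · omega

theorem aux_wt_le (m s : ℕ) (hm : 4 ≤ m) (P : PartialOrder (Fin s)) (π : Fin s → ℕ)
    (S : Finset (Fin s)) (hS : AuxLower s P S) (u : ∀ i : Fin s, Fin (π i) → ZMod m)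
    (hu : ∀ i, i ∉ S → u i = 0) : pomsetWt m s P π u ≤ S.card * (m / 2) := by
  calc pomsetWt m s P π u ≤ ∑ i, if i ∈ S then m / 2 else 0 := by
        unfold pomsetWt
        apply Finset.sum_le_sum
        intro i _
        by_cases hi : i ∈ S
        · rw [if_pos hi]
          split_ifs
          · exact le_rfl
          · exact aux_block_le m s π u i
        · rw [if_neg hi, if_neg]
          · exact ((aux_block_zero m s hm π u i).2 (hu i hi)).le
          · rintro ⟨j, _, hij, hp⟩
            have hj : j ∉ S := fun hj => hi (hS j i hj hij)
            have := (aux_block_zero m s hm π u j).2 (hu j hj)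
            omega
    _ = S.card * (m / 2) := by simp

/-- a code that is `I`-perfect for every ideal of cardinality
`((n − ⌈log_m K⌉)/t)·⌊m/2⌋` is MDS. -/
theorem all_I_perfect_implies_mds
    (m s : ℕ) (hm : 4 ≤ m) (hs : 1 ≤ s)
    (P : PartialOrder (Fin s)) (π : Fin s → ℕ) (hπ : ∀ i, 0 < π i)
    (t : ℕ) (ht : ∀ i, π i = t)
    (n K d : ℕ) (hn : n = ∑ i, π i)
    (C : Set (∀ i : Fin s, Fin (π i) → ZMod m))
    (hK : Nat.card ↥C = K) (hK2 : 2 ≤ K)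
    (hd : IsLeast {r | ∃ c ∈ C, ∃ c' ∈ C, c ≠ c' ∧
      r = pomsetWt m s P π (c - c')} d)
    (hdiv : t ∣ (n - Nat.clog m K))
    (hperf : ∀ I, IsIdeal m s P I →
      idealCard I = ((n - Nat.clog m K) / t) * (m / 2) →
      IPerfect m s π I C) :
    IsMDS m s P π C := by
  have hsum : ∑ i, π i = s * t := by simp [ht]
  have ht0 : 0 < t := by
    have := hπ ⟨0, hs⟩
    rwa [ht] at this
  have hl : 0 < m / 2 := by omega
  obtain ⟨r, hr⟩ := hdiv
  have hrdiv : (n - Nat.clog m K) / t = r := by rw [hr, Nat.mul_div_cancel_left _ ht0]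
  rw [hrdiv] at hperf
  have hclog : 0 < Nat.clog m K := Nat.clog_pos (by omega) hK2
  have hrs : r < s := by
    have h1 : 0 < s * t := Nat.mul_pos hs ht0
    have h2 : t * r < t * s := by
      rw [← hr, hn, hsum, Nat.mul_comm t s]; omega
    exact Nat.lt_of_mul_lt_mul_left h2
  have hmd : minDist m s P π C = d := hd.csInf_eq
  have hlow : r * (m / 2) < d := by
    by_contra! hcon
    obtain ⟨c, hc, c', hc', hne, hdw⟩ := hd.1
    obtain ⟨I, hI, hIc, hIb⟩ := aux_wt_ideal m s P π (c - c')
    have hrl : r * (m / 2) ≤ s * (m / 2) := Nat.mul_le_mul_right _ hrs.le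
    obtain ⟨J, hJ, hJc, hJle⟩ := aux_extend m s P (r * (m / 2) - idealCard I) I hI (by omega)
    have hp := (hperf J hJ (by omega)).1 hc hc' hne
    refine (Set.disjoint_left.1 hp : ∀ ⦃a⦄, _ → _) (?_ : c' ∈ _) ?_
    · exact fun i => (hIb i).trans (hJle i)
    · intro i
      rw [(aux_block_zero m s hm π _ i).2 (by simp)]
      exact Nat.zero_le _
  obtain ⟨S, hS, hSc⟩ := aux_lower_exists s P r hrs.le
  have hSI := aux_lower_ideal m s P S hS
  have hup : d ≤ (r + 1) * (m / 2) := by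
    obtain ⟨a, ha, hSa⟩ := aux_lower_insert s P S hS (by omega)
    obtain ⟨c, hc, -⟩ := hd.1
    have hcov := (hperf _ hSI (by simp [idealCard, hSc])).2
    have hv : Function.update c a (c a + 1) ∈ (Set.univ : Set (∀ i : Fin s, Fin (π i) → ZMod m)) :=
      Set.mem_univ _
    rw [← hcov] at hv
    simp only [Set.mem_iUnion] at hv
    obtain ⟨c', hc', hb⟩ := hv
    have hb' : ∀ i, i ∉ S → c' i = Function.update c a (c a + 1) i := by
      intro i hi
      have h1 := hb i
      simp only [if_neg hi] at h1
      have h2 := (aux_block_zero m s hm π _ i).1 (Nat.le_zero.1 h1)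
      exact sub_eq_zero.1 h2
    have hne : c ≠ c' := by
      rintro rfl
      have h1 := hb' a ha
      rw [Function.update_self] at h1
      have h2 := congrFun h1 ⟨0, hπ a⟩
      haveI : Fact (1 < m) := ⟨by omega⟩
      simp at h2
    have h3 := hd.2 ⟨c, hc, c', hc', hne, rfl⟩
    have h4 := aux_wt_le m s hm P π (insert a S) hSa (c - c') (by
      intro i hi
      rw [Finset.mem_insert, not_or] at hi
      have h1 := hb' i hi.2
      rw [Function.update_of_ne hi.1] at h1
      simp [h1])
    rw [Finset.card_insert_of_notMem ha, hSc] at h4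
    exact h3.trans h4
  have hq : (d - 1) / (m / 2) = r := by
    apply Nat.div_eq_of_lt_le
    · omega
    · have : (r + 1) * (m / 2) = Nat.succ r * (m / 2) := rfl
      omega
  have hroot : ∀ I : Fin s → ℕ, rootSum π I = rootCard I * t := by
    intro I
    simp [rootSum, rootCard, ht]
  unfold IsMDS
  rw [hmd, hq, hK, ← hn, hr]
  refine ⟨?_, _, hSI, ?_, ?_⟩
  · intro I _ hI
    rw [hroot, hI, Nat.mul_comm]
  · have : (Finset.univ.filter fun a => 0 < if a ∈ S then m / 2 else 0) = S := by
      ext a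
      by_cases h : a ∈ S <;> simp [h]; try omega
    unfold rootCard
    rw [this, hSc]
  · have : (Finset.univ.filter fun a => 0 < if a ∈ S then m / 2 else 0) = S := by
      ext a
      by_cases h : a ∈ S <;> simp [h]; try omega
    rw [hroot]
    unfold rootCard
    rw [this, hSc, Nat.mul_comm]
end
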